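/- Let q be a complex number with 0 < |q| < 1, fix a square root q^{1/2} of q, and let a be a complex number with |a| < 1. Then ∫₀^π h(cos θ; 1, q^{1/2}, -q^{1/2}) / h(cos θ; a) dθ = 2π / ((q; q)_∞ (-a; q)_∞). -/

import Mathlib

open Complex MeasureTheory

/-- The q-shifted factorial `(x; q)_∞ = ∏_{k=0}^∞ (1 - x q^k)`. -/
noncomputable def qp (q x : ℂ) : ℂ := ∏' k : ℕ, (1 - x * q ^ k)

/-- The finite q-shifted factorial `(x; q)_n = ∏_{k=0}^{n-1} (1 - x q^k)`. -/
noncomputable def qpn (q x : ℂ) (n : ℕ) : ℂ := ∏ k ∈ Finset.range n, (1 - x * q ^ k)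

/-- For `x = cos θ`, `h(x; λ) = (λ e^{iθ}; q)_∞ (λ e^{-iθ}; q)_∞`. -/
noncomputable def hh (q : ℂ) (θ : ℝ) (l : ℂ) : ℂ :=
  qp q (l * Complex.exp ((θ : ℂ) * Complex.I)) *
    qp q (l * Complex.exp (-((θ : ℂ) * Complex.I)))


theorem qp_summ (q x : ℂ) (hq : ‖q‖ < 1) : Summable (fun k : ℕ => ‖-(x * q ^ k)‖) := by
  simp only [norm_neg, norm_mul, norm_pow]
  exact (summable_geometric_of_lt_one (norm_nonneg _) hq).mul_left _

theorem qp_mult (q x : ℂ) (hq : ‖q‖ < 1) : Multipliable (fun k : ℕ => 1 - x * q ^ k) := by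
  simpa [sub_eq_add_neg] using multipliable_one_add_of_summable (qp_summ q x hq)

theorem qp_rec (q x : ℂ) (hq : ‖q‖ < 1) : qp q x = (1 - x) * qp q (q * x) := by
  unfold qp
  have e : ∀ k : ℕ, 1 - q * x * q ^ k = 1 - x * q ^ (k + 1) := fun k => by ring
  rw [tprod_eq_zero_mul']
  · simp [e]
  · simpa [e] using qp_mult q (q * x) hq

theorem qp_ne (q x : ℂ) (hq : ‖q‖ < 1) (hx : ‖x‖ < 1) : qp q x ≠ 0 := by
  have h := tprod_one_add_ne_zero_of_summable (f := fun k : ℕ => -(x * q ^ k)) ?_ (qp_summ q x hq)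
  · simpa [qp, sub_eq_add_neg] using h
  · intro k h
    have h1 : x * q ^ k = 1 := by linear_combination -h
    have h2 : ‖x‖ * ‖q‖ ^ k = 1 := by rw [← norm_pow, ← norm_mul, h1, norm_one]
    have h3 : ‖q‖ ^ k ≤ 1 := pow_le_one₀ (norm_nonneg _) hq.le
    nlinarith [norm_nonneg x]

theorem qp_sq (q x : ℂ) (hq : ‖q‖ < 1) : qp q x * qp q (-x) = qp (q ^ 2) (x ^ 2) := by
  unfold qp
  rw [← (qp_mult q x hq).tprod_mul (qp_mult q (-x) hq)]
  congr 1
  ext k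
  ring

theorem qp_zero (q : ℂ) : qp q 0 = 1 := by simp [qp]

theorem qp_diff (q : ℂ) (hq : ‖q‖ < 1) : Differentiable ℂ (qp q) := by
  intro x
  have h := Summable.hasProdLocallyUniformlyOn_nat_one_add (K := Metric.ball (0:ℂ) (‖x‖ + 1))
    (f := fun (k : ℕ) (y : ℂ) => -(y * q ^ k)) (u := fun k => (‖x‖ + 1) * ‖q‖ ^ k)
    Metric.isOpen_ball ((summable_geometric_of_lt_one (norm_nonneg _) hq).mul_left _)
    (Filter.Eventually.of_forall fun n y hy => by
      simp only [norm_neg, norm_mul, norm_pow]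
      gcongr
      simpa using (Metric.mem_ball.1 hy).le)
    (fun n => by fun_prop)
  have h2 := h.tendstoLocallyUniformlyOn_finsetRange.differentiableOn
    (Filter.Eventually.of_forall fun n => by fun_prop) Metric.isOpen_ball
  have h3 := h2.differentiableAt (x := x) (Metric.isOpen_ball.mem_nhds (by simp))
  refine h3.congr_of_eventuallyEq ?_
  refine Filter.Eventually.of_forall fun y => ?_
  simp [qp, sub_eq_add_neg]

/-- average over the unit circle -/
noncomputable def Av (F : ℂ → ℂ) : ℂ := ∫ θ in (0:ℝ)..2 * Real.pi, F (Complex.exp ((θ : ℂ) * Complex.I))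

theorem Av_congr {F G : ℂ → ℂ} (h : ∀ z, ‖z‖ = 1 → F z = G z) : Av F = Av G := by
  unfold Av
  congr 1
  ext θ
  exact h _ (Complex.norm_exp_ofReal_mul_I θ)

theorem Av_int {F : ℂ → ℂ} (h : ∀ z, ‖z‖ = 1 → ContinuousAt F z) (a b : ℝ) :
    IntervalIntegrable (fun θ : ℝ => F (Complex.exp ((θ : ℂ) * Complex.I))) volume a b := by
  apply Continuous.intervalIntegrable
  rw [continuous_iff_continuousAt]
  intro θ
  refine ContinuousAt.comp (f := fun θ : ℝ => Complex.exp ((θ : ℂ) * Complex.I))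
    (h _ (Complex.norm_exp_ofReal_mul_I θ)) ?_
  fun_prop

theorem Av_per (F : ℂ → ℂ) :
    Function.Periodic (fun θ : ℝ => F (Complex.exp ((θ : ℂ) * Complex.I))) (2 * Real.pi) := by
  intro θ
  have : Complex.exp (((θ + 2 * Real.pi : ℝ) : ℂ) * Complex.I)
      = Complex.exp ((θ : ℂ) * Complex.I) := by
    push_cast
    rw [add_mul, Complex.exp_periodic]
  simp only [this]

theorem Av_rot (F : ℂ → ℂ) (c : ℝ) :
    Av (fun z => F (Complex.exp ((c : ℂ) * Complex.I) * z)) = Av F := by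
  unfold Av
  have h := (Av_per F).intervalIntegral_add_eq c 0
  rw [zero_add, add_comm c] at h
  rw [← h]
  have h2 := intervalIntegral.integral_comp_add_right (a := 0) (b := 2 * Real.pi)
    (fun θ : ℝ => F (Complex.exp ((θ : ℂ) * Complex.I))) c
  rw [zero_add] at h2
  rw [← h2]
  congr 1
  ext θ
  dsimp only
  rw [← Complex.exp_add]
  congr 2
  push_cast
  ring

theorem Av_inv (F : ℂ → ℂ) : Av (fun z => F z⁻¹) = Av F := by
  unfold Av
  have h := (Av_per F).intervalIntegral_add_eq (-(2 * Real.pi)) 0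
  rw [zero_add, neg_add_cancel] at h
  have h2 := intervalIntegral.integral_comp_neg (a := 0) (b := 2 * Real.pi)
    (fun θ : ℝ => F (Complex.exp ((θ : ℂ) * Complex.I)))
  rw [neg_zero, h] at h2
  rw [← h2]
  congr 1
  ext θ
  dsimp only
  rw [← Complex.exp_neg]
  congr 2
  push_cast
  ring

theorem circ_eq (F : ℂ → ℂ) (r : ℝ) (hr : 0 < r) :
    (∮ z in C(0, r), (z - 0)⁻¹ • F z) = Complex.I * Av (fun z => F (r * z)) := by
  unfold Av
  rw [circleIntegral, ← intervalIntegral.integral_const_mul]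
  congr 1
  ext θ
  have : (r : ℂ) ≠ 0 := by exact_mod_cast hr.ne'
  have := Complex.exp_ne_zero ((θ : ℂ) * Complex.I)
  simp only [deriv_circleMap, circleMap_zero, sub_zero, smul_eq_mul]
  field_simp

theorem Av_shift (F : ℂ → ℂ) (q : ℂ) (hq0 : 0 < ‖q‖) (hq : ‖q‖ < 1)
    (h : ∀ z, ‖q‖ ≤ ‖z‖ → ‖z‖ ≤ 1 → DifferentiableAt ℂ F z) :
    Av (fun z => F (q * z)) = Av F := by
  have h1 := Complex.circleIntegral_sub_center_inv_smul_eq_of_differentiable_on_annulus_off_countable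
    (c := 0) hq0 hq.le (f := F) Set.countable_empty
    (fun z hz => by
      simp only [Set.mem_sdiff, Metric.mem_closedBall, dist_zero_right, Metric.mem_ball, not_lt] at hz
      exact (h z hz.2 hz.1).continuousAt.continuousWithinAt)
    (fun z hz => by
      simp only [Set.mem_sdiff, Metric.mem_closedBall, dist_zero_right, Metric.mem_ball, not_le] at hz
      exact h z hz.1.2.le hz.1.1.le)
  rw [circ_eq _ _ one_pos, circ_eq _ _ hq0] at h1
  have h2 := mul_left_cancel₀ Complex.I_ne_zero h1
  simp only [Complex.ofReal_one, one_mul] at h2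
  rw [h2, ← Av_rot (fun z => F (‖q‖ * z)) q.arg]
  congr 1
  ext z
  rw [← mul_assoc, Complex.norm_mul_exp_arg_mul_I]

theorem Av_entire (F : ℂ → ℂ) (h : Differentiable ℂ F) : Av F = 2 * Real.pi * F 0 := by
  have h1 := h.differentiableOn.circleIntegral_sub_inv_smul (R := 1) (c := 0) (w := 0) (by simp)
  rw [circ_eq _ _ one_pos] at h1
  simp only [Complex.ofReal_one, one_mul, smul_eq_mul] at h1
  apply mul_left_cancel₀ Complex.I_ne_zero
  rw [h1]; ring

theorem Av_add {F G : ℂ → ℂ} (hF : ∀ z, ‖z‖ = 1 → ContinuousAt F z)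
    (hG : ∀ z, ‖z‖ = 1 → ContinuousAt G z) : Av (fun z => F z + G z) = Av F + Av G :=
  intervalIntegral.integral_add (Av_int hF _ _) (Av_int hG _ _)

theorem Av_mul (c : ℂ) (F : ℂ → ℂ) : Av (fun z => c * F z) = c * Av F :=
  intervalIntegral.integral_const_mul _ _

theorem Av_cont (H : ℂ → ℂ → ℂ)
    (h : ∀ a z : ℂ, ‖a‖ < 1 → ‖z‖ = 1 → ContinuousAt (fun p : ℂ × ℂ => H p.1 p.2) (a, z)) :
    ContinuousAt (fun a => Av (H a)) 0 := by
  have h1 : Continuous (fun a : Metric.ball (0:ℂ) 1 => Av (H a)) := by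
    unfold Av
    apply intervalIntegral.continuous_parametric_intervalIntegral_of_continuous'
    rw [continuous_iff_continuousAt]
    rintro ⟨⟨a, ha⟩, θ⟩
    refine ContinuousAt.comp (f := fun p : Metric.ball (0:ℂ) 1 × ℝ =>
      ((p.1 : ℂ), Complex.exp ((p.2 : ℂ) * Complex.I))) (g := fun p : ℂ × ℂ => H p.1 p.2)
      (h a _ (by simpa using ha) (Complex.norm_exp_ofReal_mul_I θ)) ?_
    fun_prop
  have h2 : ContinuousOn (fun a => Av (H a)) (Metric.ball (0:ℂ) 1) :=
    continuousOn_iff_continuous_domRestrict.2 h1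
  exact h2.continuousAt (Metric.isOpen_ball.mem_nhds (by simp))

theorem lim_const (G : ℂ → ℂ) (q : ℂ) (hq : ‖q‖ < 1) (hG : ContinuousAt G 0)
    (h : ∀ a, ‖a‖ < 1 → G a = G (q * a)) (a : ℂ) (ha : ‖a‖ < 1) : G a = G 0 := by
  have h1 : ∀ n : ℕ, G (q ^ n * a) = G a := by
    intro n
    induction n with
    | zero => simp
    | succ n ih =>
      rw [← ih, h (q ^ n * a)]
      · ring_nf
      · rw [norm_mul, norm_pow]
        have : ‖q‖ ^ n ≤ 1 := pow_le_one₀ (norm_nonneg _) hq.le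
        nlinarith [norm_nonneg a]
  have h2 : Filter.Tendsto (fun n : ℕ => q ^ n * a) Filter.atTop (nhds 0) := by
    simpa using (tendsto_pow_atTop_nhds_zero_of_norm_lt_one hq).mul_const a
  have h3 := hG.tendsto.comp h2
  refine tendsto_nhds_unique (f := fun _ : ℕ => G a) (l := Filter.atTop) tendsto_const_nhds ?_
  simpa [Function.comp_def, h1] using h3

noncomputable def Th (q z : ℂ) : ℂ := qp (q ^ 2) (q * z ^ 2) * qp (q ^ 2) (q * z⁻¹ ^ 2)

noncomputable def th (q z : ℂ) : ℂ := qp q z * qp q (q * z⁻¹)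

theorem sq_lt (q : ℂ) (hq : ‖q‖ < 1) : ‖q ^ 2‖ < 1 := by
  rw [norm_pow]; exact pow_lt_one₀ (norm_nonneg _) hq two_ne_zero

theorem Th_shift (q z : ℂ) (hq : ‖q‖ < 1) (hq0 : q ≠ 0) (hz : z ≠ 0) :
    Th q (q * z) = -(Th q z) / (q * z ^ 2) := by
  unfold Th
  have h1 := qp_rec (q ^ 2) (q * z ^ 2) (sq_lt q hq)
  have h2 := qp_rec (q ^ 2) (q * (q * z)⁻¹ ^ 2) (sq_lt q hq)
  have e : q ^ 2 * (q * (q * z)⁻¹ ^ 2) = q * z⁻¹ ^ 2 := by field_simp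
  have e2 : q ^ 2 * (q * z ^ 2) = q * (q * z) ^ 2 := by ring
  rw [e] at h2
  rw [e2] at h1
  rw [h1, h2]
  field_simp
  ring

theorem th_shift (q z : ℂ) (hq : ‖q‖ < 1) (hq0 : q ≠ 0) (hz : z ≠ 0) :
    th q (q * z) = -(th q z) / z := by
  unfold th
  have h1 := qp_rec q z hq
  have h2 := qp_rec q z⁻¹ hq
  have e : q * (q * z)⁻¹ = z⁻¹ := by field_simp
  rw [e, h1, h2]
  field_simp
  ring

theorem Th_diff (q z : ℂ) (hq : ‖q‖ < 1) (hz : z ≠ 0) : DifferentiableAt ℂ (Th q) z := by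
  have := qp_diff (q ^ 2) (sq_lt q hq)
  unfold Th
  fun_prop (disch := assumption)

theorem th_diff (q z : ℂ) (hq : ‖q‖ < 1) (hz : z ≠ 0) : DifferentiableAt ℂ (th q) z := by
  have := qp_diff q hq
  unfold th
  fun_prop (disch := assumption)

theorem ne_of_norm {z : ℂ} (hz : ‖z‖ = 1) : z ≠ 0 := by
  rintro rfl; simp at hz

noncomputable def KK (q b : ℂ) : ℂ := Av (fun z => Th q z / qp (q ^ 2) (b * z ^ 2))

theorem KK_ne (q b z : ℂ) (hq : ‖q‖ < 1) (hb : ‖b‖ < 1) (hz : ‖z‖ ≤ 1) :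
    qp (q ^ 2) (b * z ^ 2) ≠ 0 := by
  apply qp_ne _ _ (sq_lt q hq)
  rw [norm_mul, norm_pow]
  have : ‖z‖ ^ 2 ≤ 1 := pow_le_one₀ (norm_nonneg _) hz
  nlinarith [norm_nonneg b]

theorem mul_lt' {a b : ℂ} (ha : ‖a‖ < 1) (hb : ‖b‖ < 1) : ‖a * b‖ < 1 := by
  rw [norm_mul]; nlinarith [norm_nonneg a, norm_nonneg b]

theorem KK_step (q b : ℂ) (hq : ‖q‖ < 1) (hq0 : 0 < ‖q‖) (hb : ‖b‖ < 1) :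
    KK q b = (1 - b * q) * KK q (q ^ 2 * b) := by
  have hq0' : q ≠ 0 := norm_pos_iff.1 hq0
  have hd := qp_diff (q ^ 2) (sq_lt q hq)
  have hpb := mul_lt' (sq_lt q hq) hb
  have D : ∀ b, ‖b‖ < 1 → ∀ z, z ≠ 0 → ‖z‖ ≤ 1 →
      DifferentiableAt ℂ (fun z => Th q z / qp (q ^ 2) (b * z ^ 2)) z := by
    intro b hb z h0 h1
    have := Th_diff q z hq h0
    have := KK_ne q b z hq hb h1
    fun_prop (disch := assumption)
  have Df : ∀ z, z ≠ 0 → ‖z‖ ≤ 1 →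
      DifferentiableAt ℂ (fun z => z ^ 2 * (Th q z / qp (q ^ 2) (b * z ^ 2))) z := by
    intro z h0 h1
    have := D b hb z h0 h1
    fun_prop
  have s := Av_shift (fun z => z ^ 2 * (Th q z / qp (q ^ 2) (b * z ^ 2))) q hq0 hq
    (fun z h1 h2 => Df z (norm_pos_iff.1 (hq0.trans_le h1)) h2)
  have s1 : Av (fun z => (q * z) ^ 2 * (Th q (q * z) / qp (q ^ 2) (b * (q * z) ^ 2)))
      = -q * KK q (q ^ 2 * b) := by
    unfold KK
    rw [← Av_mul]
    apply Av_congr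
    intro z hz
    have hz0 := ne_of_norm hz
    have e : b * (q * z) ^ 2 = q ^ 2 * b * z ^ 2 := by ring
    have := KK_ne q (q ^ 2 * b) z hq hpb hz.le
    rw [Th_shift q z hq hq0' hz0, e]
    field_simp
  have s2 : KK q b = KK q (q ^ 2 * b)
      + b * Av (fun z => z ^ 2 * (Th q z / qp (q ^ 2) (b * z ^ 2))) := by
    unfold KK
    rw [← Av_mul, ← Av_add]
    · apply Av_congr
      intro z hz
      have h1 := KK_ne q (q ^ 2 * b) z hq hpb hz.le
      have h2 := KK_ne q b z hq hb hz.le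
      have h3 := qp_rec (q ^ 2) (b * z ^ 2) (sq_lt q hq)
      rw [← mul_assoc] at h3
      rw [h3] at h2 ⊢
      have h4 := left_ne_zero_of_mul h2
      field_simp
      ring
    · intro z hz
      exact (D _ hpb z (ne_of_norm hz) hz.le).continuousAt
    · intro z hz
      exact ((Df z (ne_of_norm hz) hz.le).const_mul b).continuousAt
  rw [← s, s1] at s2
  rw [s2]
  ring

theorem Av_Th (q : ℂ) (hq : ‖q‖ < 1) (hq0 : 0 < ‖q‖) :
    Av (Th q) = 2 * Real.pi / qp (q ^ 2) (q ^ 2) := by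
  have hd := qp_diff (q ^ 2) (sq_lt q hq)
  have hc := hd.continuous
  have h := lim_const (fun b => KK q b / qp (q ^ 2) (b * q)) (q ^ 2) (sq_lt q hq) ?_ ?_ q hq
  · have h1 : KK q q = 2 * Real.pi := by
      have : KK q q = Av (fun z => (fun w => qp (q ^ 2) (q * w ^ 2)) z⁻¹) := by
        apply Av_congr
        intro z hz
        have := KK_ne q q z hq hq hz.le
        simp only [Th]
        field_simp
      rw [this, Av_inv (fun w => qp (q ^ 2) (q * w ^ 2)), Av_entire]
      · simp [qp_zero]
      · fun_prop
    have h2 : KK q 0 = Av (Th q) := by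
      apply Av_congr
      intro z hz
      simp [qp_zero]
    simp only [h1, h2, zero_mul, qp_zero, div_one] at h
    rw [← h, pow_two q]
  · apply ContinuousAt.div
    · apply Av_cont (fun b z => Th q z / qp (q ^ 2) (b * z ^ 2))
      intro b z hb hz
      have h1 := KK_ne q b z hq hb hz.le
      have h2 : ContinuousAt (fun p : ℂ × ℂ => Th q p.2) (b, z) :=
        ContinuousAt.comp (f := fun p : ℂ × ℂ => p.2) (g := Th q)
          (Th_diff q z hq (ne_of_norm hz)).continuousAt continuousAt_snd
      refine h2.div ?_ h1
      fun_prop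
    · fun_prop
    · simp [qp_zero]
  · intro b hb
    have h1 := qp_rec (q ^ 2) (b * q) (sq_lt q hq)
    have h2 := qp_ne (q ^ 2) (b * q) (sq_lt q hq) (mul_lt' hb hq)
    rw [← mul_assoc] at h1
    rw [KK_step q b hq hq0 hb]
    rw [h1] at h2 ⊢
    have := left_ne_zero_of_mul h2
    have := right_ne_zero_of_mul h2
    field_simp

noncomputable def ww (q z : ℂ) : ℂ := qp q z * qp q z⁻¹ * Th q z

noncomputable def II (q a : ℂ) : ℂ := Av (fun z => ww q z / (qp q (a * z) * qp q (a * z⁻¹)))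

theorem II_ne (q a z : ℂ) (hq : ‖q‖ < 1) (ha : ‖a‖ < 1) (hz : ‖z‖ = 1) :
    qp q (a * z) * qp q (a * z⁻¹) ≠ 0 := by
  apply mul_ne_zero <;> apply qp_ne _ _ hq <;> simpa [hz] using ha

theorem ww_diff (q z : ℂ) (hq : ‖q‖ < 1) (hz : z ≠ 0) : DifferentiableAt ℂ (ww q) z := by
  have := qp_diff q hq
  have := Th_diff q z hq hz
  unfold ww
  fun_prop (disch := assumption)

theorem II_diff (q a z : ℂ) (hq : ‖q‖ < 1) (ha : ‖a‖ < 1) (hz : ‖z‖ = 1) :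
    DifferentiableAt ℂ (fun z => ww q z / (qp q (a * z) * qp q (a * z⁻¹))) z := by
  have := qp_diff q hq
  have h0 := ne_of_norm hz
  have := ww_diff q z hq h0
  have := II_ne q a z hq ha hz
  fun_prop (disch := assumption)

theorem II_step (q a : ℂ) (hq : ‖q‖ < 1) (hq0 : 0 < ‖q‖) (ha : ‖a‖ < 1) :
    (1 + a) * II q a = II q (q * a) := by
  have hq0' : q ≠ 0 := norm_pos_iff.1 hq0
  have hd := qp_diff q hq
  have hqa := mul_lt' hq ha
  have N : ∀ z, ‖q‖ ≤ ‖z‖ → ‖z‖ ≤ 1 → qp q (a * z) * qp q (q * a * z⁻¹) ≠ 0 := by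
    intro z h1 h2
    have hz0 : 0 < ‖z‖ := hq0.trans_le h1
    apply mul_ne_zero <;> apply qp_ne _ _ hq
    · rw [norm_mul]
      nlinarith [norm_nonneg a]
    · rw [norm_mul, norm_mul, norm_inv, ← div_eq_mul_inv, div_lt_one hz0]
      nlinarith [norm_nonneg a]
  have Df : ∀ z, ‖q‖ ≤ ‖z‖ → ‖z‖ ≤ 1 → DifferentiableAt ℂ
      (fun z => z * th q z * Th q z / (qp q (a * z) * qp q (q * a * z⁻¹))) z := by
    intro z h1 h2
    have h0 : z ≠ 0 := norm_pos_iff.1 (hq0.trans_le h1)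
    have := Th_diff q z hq h0
    have := th_diff q z hq h0
    have := N z h1 h2
    fun_prop (disch := assumption)
  have s := Av_shift _ q hq0 hq Df
  -- the pointwise identity
  have key : (1 + a) * II q a + a * Av (fun z => q * z * th q (q * z) * Th q (q * z) /
        (qp q (a * (q * z)) * qp q (q * a * (q * z)⁻¹)))
      = II q (q * a) + a * Av (fun z => z * th q z * Th q z / (qp q (a * z) * qp q (q * a * z⁻¹))) := by
    unfold II
    rw [← Av_mul, ← Av_mul, ← Av_mul, ← Av_add, ← Av_add]
    · apply Av_congr
      intro z hz
      have hz0 := ne_of_norm hz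
      have e1 : a * (q * z) = q * (a * z) := by ring
      have e2 : q * a * (q * z)⁻¹ = a * z⁻¹ := by field_simp
      have n := II_ne q a z hq ha hz
      rw [th_shift q z hq hq0' hz0, Th_shift q z hq hq0' hz0, e1, e2, mul_assoc q a z,
        mul_assoc q a z⁻¹]
      have r1 := qp_rec q (a * z) hq
      have r2 := qp_rec q (a * z⁻¹) hq
      have r3 := qp_rec q z⁻¹ hq
      rw [r1, r2] at n ⊢
      unfold ww th
      rw [r3]
      obtain ⟨⟨n1, n2⟩, n3, n4⟩ : ((1 - a * z) ≠ 0 ∧ qp q (q * (a * z)) ≠ 0) ∧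
          (1 - a * z⁻¹) ≠ 0 ∧ qp q (q * (a * z⁻¹)) ≠ 0 := by
        simpa only [mul_ne_zero_iff] using n
      generalize qp q (q * (a * z)) = A at *
      generalize qp q (q * (a * z⁻¹)) = B at *
      generalize qp q z = C at *
      generalize qp q (q * z⁻¹) = E at *
      generalize Th q z = T at *
      have n5 : z - a ≠ 0 := by
        intro h
        apply n3
        rw [← sub_eq_zero.1 h, mul_inv_cancel₀ hz0, sub_self]
      have e3 : 1 - a * z⁻¹ = (z - a) / z := by field_simp
      rw [e3]
      field_simp
      ring
    · intro z hz
      exact (II_diff q (q * a) z hq hqa hz).continuousAt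
    · intro z hz
      exact ((Df z (hz ▸ hq.le) hz.le).const_mul a).continuousAt
    · intro z hz
      exact ((II_diff q a z hq ha hz).const_mul (1 + a)).continuousAt
    · intro z hz
      have h1 : DifferentiableAt ℂ
        (fun z => z * th q z * Th q z / (qp q (a * z) * qp q (q * a * z⁻¹))) (q * z) :=
        Df (q * z) (by simp [hz]) (by simpa [hz] using hq.le)
      have h2 := DifferentiableAt.comp (f := fun z => q * z) z h1 (by fun_prop)
      exact (h2.const_mul a).continuousAt
  rw [s] at key
  exact add_right_cancel key

theorem II_const (q a : ℂ) (hq : ‖q‖ < 1) (hq0 : 0 < ‖q‖) (ha : ‖a‖ < 1) :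
    II q a * qp q (-a) = II q 0 * qp q (-0) := by
  have hd := qp_diff q hq
  have hc := hd.continuous
  refine lim_const (fun a => II q a * qp q (-a)) q hq ?_ ?_ a ha
  · apply ContinuousAt.mul
    · apply Av_cont (fun a z => ww q z / (qp q (a * z) * qp q (a * z⁻¹)))
      intro a z ha hz
      have h0 := ne_of_norm hz
      have h1 := II_ne q a z hq ha hz
      have h2 : ContinuousAt (fun p : ℂ × ℂ => ww q p.2) (a, z) :=
        ContinuousAt.comp (f := fun p : ℂ × ℂ => p.2) (g := ww q)
          (ww_diff q z hq h0).continuousAt continuousAt_snd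
      refine h2.div ?_ h1
      have h3 : ContinuousAt (fun p : ℂ × ℂ => p.2⁻¹) (a, z) := continuousAt_snd.inv₀ h0
      fun_prop
    · fun_prop
  · intro a ha
    have h1 := qp_rec q (-a) hq
    rw [← II_step q a hq hq0 ha, h1, mul_neg]
    ring

theorem II_q (q : ℂ) (hq : ‖q‖ < 1) (hq0 : 0 < ‖q‖) : II q q = 2 * Av (Th q) := by
  have c1 : ∀ z, ‖z‖ = 1 → ContinuousAt (Th q) z := fun z hz =>
    (Th_diff q z hq (ne_of_norm hz)).continuousAt
  have c2 : ∀ z, ‖z‖ = 1 → ContinuousAt (fun z => -(z + z⁻¹) * Th q z) z := fun z hz => by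
    have := Th_diff q z hq (ne_of_norm hz)
    have h0 := ne_of_norm hz
    exact DifferentiableAt.continuousAt (𝕜 := ℂ) (by fun_prop (disch := assumption))
  have h1 : II q q = 2 * Av (Th q) + Av (fun z => -(z + z⁻¹) * Th q z) := by
    unfold II
    rw [← Av_mul, ← Av_add _ c2]
    · apply Av_congr
      intro z hz
      have n := II_ne q q z hq hq hz
      have h0 := ne_of_norm hz
      unfold ww
      rw [qp_rec q z hq, qp_rec q z⁻¹ hq]
      have := left_ne_zero_of_mul n
      have := right_ne_zero_of_mul n
      generalize qp q (q * z) = A at *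
      generalize qp q (q * z⁻¹) = B at *
      field_simp
      ring
    · intro z hz
      exact (c1 z hz).const_mul 2
  have h2 : Av (fun z => -(z + z⁻¹) * Th q z) = -Av (fun z => -(z + z⁻¹) * Th q z) := by
    conv_lhs => rw [← Av_rot _ Real.pi]
    rw [← neg_one_mul (Av _), ← Av_mul]
    apply Av_congr
    intro z hz
    simp only [Complex.exp_pi_mul_I, Th, neg_mul, one_mul, inv_neg, neg_sq]
    ring
  have h3 : Av (fun z => -(z + z⁻¹) * Th q z) = 0 := self_eq_neg.1 h2
  rw [h1, h3, add_zero]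

theorem II_val (q a : ℂ) (hq : ‖q‖ < 1) (hq0 : 0 < ‖q‖) (ha : ‖a‖ < 1) :
    II q a = 2 * (2 * (Real.pi : ℂ) / (qp q q * qp q (-a))) := by
  have h1 := II_const q a hq hq0 ha
  rw [← II_const q q hq hq0 hq, II_q q hq hq0, Av_Th q hq hq0, ← qp_sq q q hq] at h1
  have n1 := qp_ne q q hq hq
  have n2 := qp_ne q (-q) hq (by simpa using hq)
  have n3 := qp_ne q (-a) hq (by simpa using ha)
  field_simp at h1 ⊢
  linear_combination h1

theorem Av_even (F : ℂ → ℂ) (hF : ∀ z, ‖z‖ = 1 → ContinuousAt F z) (hi : ∀ z, F z⁻¹ = F z) :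
    Av F = 2 * ∫ θ in (0:ℝ)..Real.pi, F (Complex.exp ((θ : ℂ) * Complex.I)) := by
  unfold Av
  have h := (Av_per F).intervalIntegral_add_eq (-Real.pi) 0
  rw [zero_add, show -Real.pi + 2 * Real.pi = Real.pi by ring] at h
  rw [← h, ← intervalIntegral.integral_add_adjacent_intervals (Av_int hF (-Real.pi) 0)
    (Av_int hF 0 Real.pi)]
  have h2 := intervalIntegral.integral_comp_neg (a := 0) (b := Real.pi)
    (fun θ : ℝ => F (Complex.exp ((θ : ℂ) * Complex.I)))
  rw [neg_zero] at h2
  rw [← h2, two_mul]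
  congr 2
  ext θ
  rw [← hi, ← Complex.exp_neg]
  congr 2
  push_cast
  ring

theorem integral_step_three (q u a : ℂ) (hq0 : 0 < ‖q‖) (hq : ‖q‖ < 1) (hu : u ^ 2 = q)
    (ha : ‖a‖ < 1) :
    ∫ θ in (0:ℝ)..Real.pi, (hh q θ 1 * hh q θ u * hh q θ (-u)) / hh q θ a
      = 2 * (Real.pi : ℂ) / (qp q q * qp q (-a)) := by
  have h1 := II_val q a hq hq0 ha
  unfold II at h1
  rw [Av_even _ (fun z hz => (II_diff q a z hq ha hz).continuousAt)] at h1
  · rw [← mul_left_cancel₀ two_ne_zero h1]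
    congr 1
    ext θ
    unfold hh
    rw [Complex.exp_neg]
    generalize Complex.exp ((θ : ℂ) * Complex.I) = z
    have e1 := qp_sq q (u * z) hq
    have e2 := qp_sq q (u * z⁻¹) hq
    rw [mul_pow, hu] at e1 e2
    unfold ww Th
    rw [← e1, ← e2]
    simp only [one_mul, neg_mul]
    ring
  · intro z
    simp only [ww, Th, inv_inv]
    ring
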